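/- For a finite rooted planar tree T, let γ(T) denote the number of restricted morphisms from T into the chain {1 < 2} and let γ̃(T) denote the number of all morphisms from T into the chain {1 < 2}. Then γ of the trivial tree equals 1, γ̃ of the trivial tree equals 2, and for every nontrivial T with principal subtrees T₁,…,T_k: γ(T) = 1 + ∏_{i=1}^k γ(T_i) and γ̃(T) = 1 + ∏_{i=1}^k γ̃(T_i). -/

import Mathlib

/-- A finite rooted planar tree: a single constructor taking the ordered list
of principal subtrees of the root. -/
inductive PTree : Type where
  | node : List PTree → PTree

namespace PTree

/-- The trivial tree, reduced to its root. -/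
def triv : PTree := node []

/-- Whether a tree is trivial. -/
def isTriv : PTree → Bool
  | .node [] => true
  | _ => false

mutual
/-- `d(T)`: the number of leaves of a tree. -/
def leaves : PTree → ℕ
  | .node [] => 1
  | .node (t :: ts) => leavesL (t :: ts)
def leavesL : List PTree → ℕ
  | [] => 0
  | t :: ts => leaves t + leavesL ts
end

mutual
/-- `d°(T)`: the number of internal vertices of a tree. -/
def ints : PTree → ℕ
  | .node [] => 0
  | .node (t :: ts) => 1 + intsL (t :: ts)
def intsL : List PTree → ℕ
  | [] => 0
  | t :: ts => ints t + intsL ts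
end

mutual
/-- The number of vertices of a tree. -/
def verts : PTree → ℕ
  | .node ts => 1 + vertsL ts
def vertsL : List PTree → ℕ
  | [] => 0
  | t :: ts => verts t + vertsL ts
end

/-- A tree is `k`-regular if every internal vertex has exactly `k` sons. -/
inductive Regular (k : ℕ) : PTree → Prop where
  | leaf : Regular k (.node [])
  | node (ts : List PTree) (hlen : ts.length = k) (h : ∀ t ∈ ts, Regular k t) :
      Regular k (.node ts)

end PTree
namespace PTree

/-- `IsVertex T p` means that the address `p` (a path: at each step, the index
of the son to follow) is a vertex of the tree `T`. -/
def IsVertex : PTree → List ℕ → Prop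
  | _, [] => True
  | .node ts, i :: p => ∃ h : i < ts.length, IsVertex ts[i] p

/-- The vertex set of a finite rooted planar tree, partially ordered by
`v ≤ w` iff `v` lies on the path from the root to `w`, i.e. iff the address of
`v` is a prefix of that of `w`. -/
def Vx (T : PTree) : Type := {p : List ℕ // IsVertex T p}

theorem isVertex_nil (T : PTree) : IsVertex T [] := by cases T; simp [IsVertex]

/-- The root of a tree, as a vertex. -/
def rootVx (T : PTree) : Vx T := ⟨[], isVertex_nil T⟩

/-- A morphism from the poset of vertices of `T` into a poset `P`:
an order-preserving map (the vertex order being the prefix order on addresses). -/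
def IsMorph {T : PTree} {P : Type} [Preorder P] (μ : Vx T → P) : Prop :=
  ∀ v w : Vx T, v.val <+: w.val → μ v ≤ μ w

/-- A vertex is a leaf if it has no sons (not even a `0`-th one). -/
def IsLeafVx {T : PTree} (v : Vx T) : Prop := ¬ IsVertex T (v.val ++ [0])

/-- `w` is a son of `v`. -/
def IsSon {T : PTree} (v w : Vx T) : Prop := ∃ i : ℕ, w.val = v.val ++ [i]

/-- The number of restricted morphisms from the vertex poset of `T` into the
chain `{1 < 2 < … < m}` (realized as `Fin m`): order-preserving maps sending
every leaf of `T` to the top element `m` (i.e. `m - 1` in `Fin m`). -/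
noncomputable def restrCount (m : ℕ) (T : PTree) : ℕ :=
  Nat.card {μ : Vx T → Fin m //
    IsMorph μ ∧ ∀ v : Vx T, IsLeafVx v → (μ v : ℕ) = m - 1}

/-- The number of all morphisms from the vertex poset of `T` into the chain
`{1 < 2 < … < m}` (realized as `Fin m`). -/
noncomputable def morphCount (m : ℕ) (T : PTree) : ℕ :=
  Nat.card {μ : Vx T → Fin m // IsMorph μ}

/-- `σ(T)`: the number of surjective morphisms from the vertex poset of `T`
(with `n` vertices) onto the chain `{1 < 2 < … < n}`. -/
noncomputable def surjCount (T : PTree) : ℕ :=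
  Nat.card {μ : Vx T → Fin T.verts // IsMorph μ ∧ Function.Surjective μ}

end PTree

namespace PTree

theorem isVertex_cons (ts : List PTree) (i : ℕ) (p : List ℕ) :
    IsVertex (.node ts) (i :: p) ↔ ∃ h : i < ts.length, IsVertex ts[i] p := by
  rw [IsVertex]

/-- Inclusion of the vertices of a principal subtree. -/
def subVx (ts : List PTree) (i : Fin ts.length) (v : Vx ts[i]) : Vx (.node ts) :=
  ⟨i.1 :: v.1, (isVertex_cons _ _ _).2 ⟨i.2, v.2⟩⟩

theorem vx_cases (ts : List PTree) (v : Vx (.node ts)) :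
    v = rootVx _ ∨ ∃ i w, v = subVx ts i w := by
  obtain ⟨p, hp⟩ := v
  cases p with
  | nil => left; rfl
  | cons i p =>
    right
    obtain ⟨h, hp'⟩ := (isVertex_cons _ _ _).1 hp
    exact ⟨⟨i, h⟩, ⟨p, hp'⟩, rfl⟩

theorem finite_vx : (T : PTree) → Finite (Vx T)
  | .node ts => by
    have ih : ∀ i : Fin ts.length, Finite (Vx ts[i]) := fun i => finite_vx ts[i]
    refine Finite.of_surjective
      (fun o : Option (Σ i : Fin ts.length, Vx ts[i]) =>
        o.elim (rootVx (.node ts)) (fun x => subVx ts x.1 x.2)) ?_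
    intro v
    rcases vx_cases ts v with h | ⟨i, w, h⟩
    · exact ⟨none, h.symm⟩
    · exact ⟨some ⟨i, w⟩, h.symm⟩
termination_by T => sizeOf T
decreasing_by
  have := List.sizeOf_get ts i
  simp at this ⊢
  omega

/-- Morphisms into the two-element chain, restricted if `r` holds. -/
def Good (r : Prop) {T : PTree} (μ : Vx T → Fin 2) : Prop :=
  IsMorph μ ∧ (r → ∀ v : Vx T, IsLeafVx v → (μ v : ℕ) = 2 - 1)

/-- Extend maps on the principal subtrees by sending the root to the bottom. -/
def glue (ts : List PTree) (f : ∀ i : Fin ts.length, Vx ts[i] → Fin 2) :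
    Vx (.node ts) → Fin 2
  | ⟨[], _⟩ => 0
  | ⟨i :: p, h⟩ => f ⟨i, ((isVertex_cons _ _ _).1 h).1⟩ ⟨p, ((isVertex_cons _ _ _).1 h).2⟩

theorem glue_root (ts f) : glue ts f (rootVx _) = 0 := rfl

theorem glue_sub (ts f i w) : glue ts f (subVx ts i w) = f i w := rfl

theorem leaf_sub (ts i w) : IsLeafVx (subVx ts i w) ↔ IsLeafVx w := by
  unfold IsLeafVx subVx
  rw [List.cons_append, isVertex_cons]
  simp

theorem not_leaf_root (ts : List PTree) (h : ts ≠ []) : ¬ IsLeafVx (rootVx (.node ts)) := by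
  unfold IsLeafVx rootVx
  rw [List.nil_append, isVertex_cons, not_not]
  exact ⟨List.length_pos_iff.2 h, isVertex_nil _⟩

theorem good_glue (r : Prop) (ts : List PTree) (hts : ts ≠ [])
    (f : ∀ i : Fin ts.length, Vx ts[i] → Fin 2) :
    Good r (glue ts f) ↔ ∀ i, Good r (f i) := by
  constructor
  · rintro ⟨h1, h2⟩ i
    refine ⟨fun v w hvw => ?_, fun hr v hv => ?_⟩
    · exact h1 (subVx ts i v) (subVx ts i w) (List.cons_prefix_cons.2 ⟨rfl, hvw⟩)
    · exact h2 hr (subVx ts i v) ((leaf_sub _ _ _).2 hv)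
  · intro h
    refine ⟨fun v w hvw => ?_, fun hr v hv => ?_⟩
    · rcases vx_cases ts v with rfl | ⟨i, v, rfl⟩
      · rw [glue_root]; exact Fin.zero_le _
      · rcases vx_cases ts w with rfl | ⟨j, w, rfl⟩
        · simp [subVx, rootVx] at hvw
        · obtain ⟨hij, hp⟩ := List.cons_prefix_cons.1 hvw
          obtain rfl := Fin.ext hij
          exact (h i).1 v w hp
    · rcases vx_cases ts v with rfl | ⟨i, v, rfl⟩
      · exact absurd hv (not_leaf_root ts hts)
      · exact (h i).2 hr v ((leaf_sub _ _ _).1 hv)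

theorem card_good (r : Prop) (ts : List PTree) (hts : ts ≠ []) :
    Nat.card {μ : Vx (.node ts) → Fin 2 // Good r μ} =
      1 + (ts.map fun T => Nat.card {μ : Vx T → Fin 2 // Good r μ}).prod := by
  have hfin := finite_vx
  let F : Option (∀ i : Fin ts.length, {μ : Vx ts[i] → Fin 2 // Good r μ}) →
      {μ : Vx (.node ts) → Fin 2 // Good r μ} := fun o =>
    match o with
    | none => ⟨fun _ => 1, fun _ _ _ => le_rfl, fun _ _ _ => rfl⟩
    | some f => ⟨glue ts fun i => (f i).1, (good_glue r ts hts _).2 fun i => (f i).2⟩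
  have hF : Function.Bijective F := by
    constructor
    · intro a b hab
      have hab' := congrArg Subtype.val hab
      rcases a with _ | f <;> rcases b with _ | g
      · rfl
      · exact absurd (congrFun hab' (rootVx _)) (by simp [F, glue_root])
      · exact absurd (congrFun hab' (rootVx _)) (by simp [F, glue_root])
      · congr 1
        funext i
        apply Subtype.ext
        funext w
        exact congrFun hab' (subVx ts i w)
    · rintro ⟨μ, hμ⟩
      by_cases h0 : μ (rootVx _) = 0
      · have hg : glue ts (fun i w => μ (subVx ts i w)) = μ := by
          funext v
          rcases vx_cases ts v with rfl | ⟨i, v, rfl⟩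
          · rw [glue_root, h0]
          · rfl
        refine ⟨some fun i => ⟨fun w => μ (subVx ts i w), ?_⟩, Subtype.ext hg⟩
        rw [← hg] at hμ
        exact (good_glue r ts hts _).1 hμ i
      · refine ⟨none, Subtype.ext ?_⟩
        funext v
        have := hμ.1 (rootVx _) v List.nil_prefix
        change 1 = μ v
        omega
  rw [← Nat.card_congr (Equiv.ofBijective F hF), Finite.card_option, Nat.card_pi, add_comm]
  congr 1
  rw [← List.prod_ofFn]
  congr 1
  apply List.ext_getElem <;> simp

theorem restr_eq (T : PTree) : restrCount 2 T = Nat.card {μ : Vx T → Fin 2 // Good True μ} := by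
  simp [restrCount, Good]

theorem morph_eq (T : PTree) : morphCount 2 T = Nat.card {μ : Vx T → Fin 2 // Good False μ} := by
  simp [morphCount, Good]

theorem triv_vx (v : Vx triv) : v = rootVx triv := by
  rcases vx_cases [] v with h | ⟨i, _⟩
  · exact h
  · exact i.elim0

theorem leaf_triv : IsLeafVx (rootVx triv) := by
  unfold IsLeafVx rootVx triv
  rw [List.nil_append, isVertex_cons]
  simp

theorem restr_triv : restrCount 2 triv = 1 := by
  unfold restrCount
  rw [Nat.card_eq_one_iff_unique]
  refine ⟨⟨fun a b => Subtype.ext (funext fun v => Fin.ext ?_)⟩,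
    ⟨⟨fun _ => 1, fun _ _ _ => le_rfl, fun _ _ => rfl⟩⟩⟩
  rw [triv_vx v, a.2.2 _ leaf_triv, b.2.2 _ leaf_triv]

theorem morph_triv : morphCount 2 triv = 2 := by
  have hb : Function.Bijective
      (fun c : Fin 2 => (⟨fun _ => c, fun _ _ _ => le_rfl⟩ : {μ : Vx triv → Fin 2 // IsMorph μ})) := by
    constructor
    · intro a b h
      exact congrFun (congrArg Subtype.val h) (rootVx triv)
    · intro μ
      refine ⟨μ.1 (rootVx triv), Subtype.ext (funext fun v => ?_)⟩
      rw [triv_vx v]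
  unfold morphCount
  rw [← Nat.card_congr (Equiv.ofBijective _ hb), Nat.card_fin]

end PTree

/-- Counting (restricted) morphisms into the chain `{1 < 2}`: writing `γ(T)`
for the number of restricted morphisms (those sending every leaf to `2`) and
`γ̃(T)` for the number of all morphisms, one has `γ(trivial) = 1`,
`γ̃(trivial) = 2`, and for every nontrivial tree with principal subtrees
`T₁, …, T_k`: `γ(T) = 1 + ∏ γ(T_i)` and `γ̃(T) = 1 + ∏ γ̃(T_i)`. -/
theorem statement11 :
    PTree.restrCount 2 PTree.triv = 1 ∧
    PTree.morphCount 2 PTree.triv = 2 ∧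
    ∀ ts : List PTree, ts ≠ [] →
      PTree.restrCount 2 (.node ts) = 1 + (ts.map (PTree.restrCount 2)).prod ∧
      PTree.morphCount 2 (.node ts) = 1 + (ts.map (PTree.morphCount 2)).prod := by
  refine ⟨PTree.restr_triv, PTree.morph_triv, fun ts hts => ⟨?_, ?_⟩⟩
  · rw [funext PTree.restr_eq]
    exact PTree.card_good True ts hts
  · rw [funext PTree.morph_eq]
    exact PTree.card_good False ts hts
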